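/- arXiv:2502.13296 — 3 statements merged into one kernel-verified Lean document; each statement's English description precedes it below -/
import Mathlib

section
/- For all positive integers dA, dB and every integer r with 1 ≤ r ≤ min(dA,dB), the set S_r of density matrices on ℂ^{dA}⊗ℂ^{dB} with Schmidt number at most r is a convex and compact subset of the space of complex matrices indexed by (Fin dA × Fin dB) × (Fin dA × Fin dB). -/
open Matrix
open scoped Kronecker ComplexOrder

/-- The Schmidt rank of a bipartite vector `ψ : m × n → ℂ`, i.e. the rank of the
matrix `C_ψ` with `(C_ψ)_{ij} = ψ (i, j)`. -/
noncomputable def schmidtRank {m n : Type*} [Fintype m] [Fintype n] (ψ : m × n → ℂ) : ℕ :=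
  (Matrix.of fun i j => ψ (i, j)).rank

/-- A matrix `ρ` indexed by `m × n` has Schmidt number at most `r` if it can be written
as `∑_k ψ_k ψ_k†` with each `ψ_k` of Schmidt rank at most `r`. -/
def SchmidtNumberLE {m n : Type*} [Fintype m] [Fintype n]
    (ρ : Matrix (m × n) (m × n) ℂ) (r : ℕ) : Prop :=
  ∃ (k : ℕ) (ψ : Fin k → m × n → ℂ),
    (∀ i, schmidtRank (ψ i) ≤ r) ∧
    ρ = ∑ i, Matrix.vecMulVec (ψ i) (star (ψ i))

/-- The Schmidt number: the least `r` such that `SchmidtNumberLE ρ r`. -/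
noncomputable def schmidtNumber {m n : Type*} [Fintype m] [Fintype n]
    (ρ : Matrix (m × n) (m × n) ℂ) : ℕ :=
  sInf {r | SchmidtNumberLE ρ r}

/-- A density matrix: positive semidefinite with unit trace. -/
def IsDensityMatrix {n : Type*} [Fintype n] (ρ : Matrix n n ℂ) : Prop :=
  ρ.PosSemidef ∧ ρ.trace = 1

/-- An effect: a Hermitian matrix `M` with `0 ≤ M ≤ I`. -/
def IsEffect {n : Type*} [Fintype n] [DecidableEq n] (M : Matrix n n ℂ) : Prop :=
  M.PosSemidef ∧ (1 - M).PosSemidef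

/-- The maximally entangled unit vector `|Φ⁺_d⟩ = (1/√d) ∑ᵢ e_{(i,i)}`. -/
noncomputable def maxEnt (d : ℕ) : Fin d × Fin d → ℂ :=
  fun p => if p.1 = p.2 then ((1 / Real.sqrt d : ℝ) : ℂ) else 0

/-- The projector `P_d = |Φ⁺_d⟩⟨Φ⁺_d|`. -/
noncomputable def projME (d : ℕ) : Matrix (Fin d × Fin d) (Fin d × Fin d) ℂ :=
  Matrix.vecMulVec (maxEnt d) (star (maxEnt d))

/-- The isotropic state `ρ^iso_d(p) = p P_d + (1−p) I/d²`. -/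
noncomputable def isoState (d : ℕ) (p : ℝ) : Matrix (Fin d × Fin d) (Fin d × Fin d) ℂ :=
  (p : ℂ) • projME d + (((1 - p) / (d ^ 2 : ℝ) : ℝ) : ℂ) • 1

/-- `|φ₂⁺⟩ = (1/√2)(e_{(0,0)} + e_{(1,1)}) ∈ ℂ⁸⊗ℂ⁸`. -/
noncomputable def phi2 : Fin 8 × Fin 8 → ℂ :=
  fun q => if q = (0, 0) ∨ q = (1, 1) then ((1 / Real.sqrt 2 : ℝ) : ℂ) else 0

/-- `ρ̃(λ) = λ ρ^iso₈(0.24) + (1−λ)|φ₂⁺⟩⟨φ₂⁺|`. -/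
noncomputable def rhoTilde (l : ℝ) : Matrix (Fin 8 × Fin 8) (Fin 8 × Fin 8) ℂ :=
  (l : ℂ) • isoState 8 0.24 + ((1 - l : ℝ) : ℂ) • Matrix.vecMulVec phi2 (star phi2)

/-!
In a decomposition `ρ = ∑ ψₖψₖ†` with `tr ρ = 1`, the weights `‖ψₖ‖²` sum to `1`, so `ρ` is a convex
combination of pure states of Schmidt rank at most `r`: the states of Schmidt number at most `r`
form the convex hull of these pure states. Matrices of rank at most `r` form a closed set, so the
unit vectors of Schmidt rank at most `r` and the corresponding pure states form compact sets, and by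
Carathéodory's theorem the convex hull of a compact set in finite dimension is compact.
-/

section ConvexHull

variable {𝕜 E : Type*} [Field 𝕜] [LinearOrder 𝕜] [IsStrictOrderedRing 𝕜]
  [AddCommGroup E] [Module 𝕜 E]

theorem convexHull_range_eq_image_stdSimplex {ι : Type*} [Fintype ι] (z : ι → E) :
    convexHull 𝕜 (Set.range z) = (fun w : ι → 𝕜 => ∑ i, w i • z i) '' stdSimplex 𝕜 ι := by
  classical
  have image_vertices :
      Set.range z = Fintype.linearCombination 𝕜 z '' Set.range fun i => Pi.single i 1 := by
    simp only [← Set.range_comp, Function.comp_def, Fintype.linearCombination_apply_single,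
      one_smul]
  rw [image_vertices, ← LinearMap.image_convexHull, convexHull_rangle_single_eq_stdSimplex]
  rfl

theorem exists_fin_mem_convexHull_range_of_mem_convexHull [FiniteDimensional 𝕜 E]
    {s : Set E} {x : E} (hx : x ∈ convexHull 𝕜 s) :
    ∃ z : Fin (Module.finrank 𝕜 E + 1) → E, (∀ i, z i ∈ s) ∧ x ∈ convexHull 𝕜 (Set.range z) := by
  rw [convexHull_eq_union] at hx
  simp only [Set.mem_iUnion] at hx
  obtain ⟨t, hts, ht, hxt⟩ := hx
  have : Nonempty t := (convexHull_nonempty_iff.1 ⟨x, hxt⟩).to_subtype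
  have card_le : Fintype.card t ≤ Fintype.card (Fin (Module.finrank 𝕜 E + 1)) := by
    rw [Fintype.card_fin]
    exact ht.card_le_finrank_succ.trans (Nat.succ_le_succ (Submodule.finrank_le _))
  obtain ⟨e⟩ := Function.Embedding.nonempty_of_card_le card_le
  refine ⟨Subtype.val ∘ Function.invFun e, fun i => hts (Function.invFun e i).2, ?_⟩
  rwa [(Function.invFun_surjective e.injective).range_comp, Subtype.range_coe]

theorem sum_mem_convexHull_inter_of_map_sum_eq_one {ι : Type*} {C : Set E} (f : E →ₗ[𝕜] 𝕜)
    (smul_mem : ∀ c : 𝕜, 0 < c → ∀ x ∈ C, c • x ∈ C) (map_pos : ∀ x ∈ C, x ≠ 0 → 0 < f x)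
    (s : Finset ι) {x : ι → E} (hx : ∀ i ∈ s, x i ∈ C) (hsum : f (∑ i ∈ s, x i) = 1) :
    ∑ i ∈ s, x i ∈ convexHull 𝕜 (C ∩ {y | f y = 1}) := by
  classical
  rw [← Finset.sum_filter_ne_zero] at hsum ⊢
  have pos : ∀ i ∈ s.filter (x · ≠ 0), 0 < f (x i) := fun i hi =>
    map_pos _ (hx i (Finset.mem_filter.1 hi).1) (Finset.mem_filter.1 hi).2
  have normalize : ∑ i ∈ s with x i ≠ 0, x i =
      ∑ i ∈ s with x i ≠ 0, f (x i) • ((f (x i))⁻¹ • x i) :=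
    Finset.sum_congr rfl fun i hi => (smul_inv_smul₀ (pos i hi).ne' _).symm
  rw [normalize]
  refine (convex_convexHull 𝕜 _).sum_mem (fun i hi => (pos i hi).le) (by rwa [← map_sum])
    fun i hi => subset_convexHull 𝕜 _ ⟨?_, ?_⟩
  · exact smul_mem _ (inv_pos.2 (pos i hi)) _ (hx i (Finset.mem_filter.1 hi).1)
  · simp [(pos i hi).ne']

end ConvexHull

theorem isCompact_convexHull {E : Type*} [AddCommGroup E] [Module ℝ E] [TopologicalSpace E]
    [ContinuousAdd E] [ContinuousSMul ℝ E] [FiniteDimensional ℝ E] {s : Set E}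
    (hs : IsCompact s) : IsCompact (convexHull ℝ s) := by
  let combination (p : (Fin (Module.finrank ℝ E + 1) → ℝ) × (Fin (Module.finrank ℝ E + 1) → E)) :
      E := ∑ i, p.1 i • p.2 i
  suffices convexHull ℝ s = combination '' (stdSimplex ℝ _ ×ˢ Set.univ.pi fun _ => s) by
    rw [this]
    exact ((isCompact_stdSimplex ℝ _).prod (isCompact_univ_pi fun _ => hs)).image (by fun_prop)
  ext x
  constructor
  · intro hx
    obtain ⟨z, hz, hxz⟩ := exists_fin_mem_convexHull_range_of_mem_convexHull hx
    rw [convexHull_range_eq_image_stdSimplex] at hxz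
    obtain ⟨w, hw, rfl⟩ := hxz
    exact ⟨(w, z), ⟨hw, fun i _ => hz i⟩, rfl⟩
  · rintro ⟨⟨w, z⟩, ⟨⟨hw, hw1⟩, hz⟩, rfl⟩
    exact (convex_convexHull ℝ s).sum_mem (fun i _ => hw i) hw1
      fun i _ => subset_convexHull ℝ s (hz i trivial)

theorem rank_smul_le {S R m n : Type*} [CommSemiring R] [StrongRankCondition R] [Fintype n]
    [Monoid S] [DistribMulAction S R] [SMulCommClass S R R] (c : S) (A : Matrix m n R) :
    (c • A).rank ≤ A.rank := by
  classical
  calc (c • A).rank = (A * c • (1 : Matrix n n R)).rank := by rw [Matrix.mul_smul, Matrix.mul_one]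
    _ ≤ A.rank := rank_mul_le_left _ _

theorem isClosed_setOf_rank_le {𝕜 m n : Type*} [NontriviallyNormedField 𝕜] [CompleteSpace 𝕜]
    [Finite m] [Fintype n] (r : ℕ) : IsClosed {A : Matrix m n 𝕜 | A.rank ≤ r} := by
  classical
  have := Fintype.ofFinite m
  let toCLM : Matrix m n 𝕜 →ₗ[𝕜] (n → 𝕜) →L[𝕜] (m → 𝕜) :=
    LinearMap.toContinuousLinearMap.toLinearMap ∘ₗ Matrix.toLin'.toLinearMap
  have rank_toCLM (A : Matrix m n 𝕜) : (toCLM A : (n → 𝕜) →ₗ[𝕜] m → 𝕜).rank = A.rank := by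
    rw [Matrix.rank, Module.finrank_eq_rank]
    rfl
  have isOpen_lt_rank : IsOpen {A : Matrix m n 𝕜 | r < A.rank} := by
    convert (isOpen_setOfPred_nat_le_rank (r + 1)).preimage toCLM.continuous_of_finiteDimensional
    ext A
    simp only [Set.mem_ofPred_eq, Set.mem_preimage, rank_toCLM, Nat.cast_le, Nat.succ_le_iff]
  simpa only [← isOpen_compl_iff, Set.compl_ofPred, not_le] using isOpen_lt_rank

theorem isCompact_setOf_dotProduct_self_star_eq_one {𝕜 n : Type*} [RCLike 𝕜] [Fintype n] :
    IsCompact {ψ : n → 𝕜 | ψ ⬝ᵥ star ψ = 1} := by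
  have dotProduct_eq (ψ : n → 𝕜) : ψ ⬝ᵥ star ψ = (‖WithLp.toLp 2 ψ‖ : 𝕜) ^ 2 := by
    rw [← inner_self_eq_norm_sq_to_K, EuclideanSpace.inner_eq_star_dotProduct]
  convert (EuclideanSpace.equiv n 𝕜).symm.toHomeomorph.isCompact_preimage.2 (isCompact_sphere 0 1)
  ext ψ
  rw [Set.mem_ofPred_eq, dotProduct_eq, Set.mem_preimage, mem_sphere_zero_iff_norm]
  norm_cast
  exact pow_eq_one_iff_of_nonneg (norm_nonneg _) two_ne_zero

theorem vecMulVec_smul_self_star {R A n : Type*} [CommSemiring R] [StarRing R] [TrivialStar R]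
    [Semiring A] [StarRing A] [Algebra R A] [StarModule R A] (c : R) (ψ : n → A) :
    vecMulVec (c • ψ) (star (c • ψ)) = c ^ 2 • vecMulVec ψ (star ψ) := by
  rw [star_smul, star_trivial, smul_vecMulVec, vecMulVec_smul, smul_smul, sq]

section SchmidtNumber

variable {m n : Type*} [Fintype m] [Fintype n]

theorem schmidtRank_smul_le {S : Type*} [Monoid S] [DistribMulAction S ℂ] [SMulCommClass S ℂ ℂ]
    (c : S) (ψ : m × n → ℂ) : schmidtRank (c • ψ) ≤ schmidtRank ψ :=
  rank_smul_le c (Matrix.of fun i j => ψ (i, j))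

theorem isClosed_setOf_schmidtRank_le (r : ℕ) :
    IsClosed {ψ : m × n → ℂ | schmidtRank ψ ≤ r} :=
  (isClosed_setOf_rank_le r).preimage (f := fun ψ : m × n → ℂ => Matrix.of fun i j => ψ (i, j))
    (by fun_prop)

namespace SchmidtNumberLE

variable {r : ℕ} {ρ σ : Matrix (m × n) (m × n) ℂ}

theorem add (hρ : SchmidtNumberLE ρ r) (hσ : SchmidtNumberLE σ r) :
    SchmidtNumberLE (ρ + σ) r := by
  obtain ⟨k, ψ, hψ, rfl⟩ := hρ
  obtain ⟨l, φ, hφ, rfl⟩ := hσ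
  refine ⟨k + l, Fin.append ψ φ, fun i => ?_, by simp [Fin.sum_univ_add]⟩
  induction i using Fin.addCases with
  | left i => simpa using hψ i
  | right i => simpa using hφ i

theorem smul (hρ : SchmidtNumberLE ρ r) {c : ℝ} (hc : 0 ≤ c) : SchmidtNumberLE (c • ρ) r := by
  obtain ⟨k, ψ, hψ, rfl⟩ := hρ
  refine ⟨k, fun i => √c • ψ i, fun i => (schmidtRank_smul_le _ _).trans (hψ i), ?_⟩
  simp only [vecMulVec_smul_self_star, Real.sq_sqrt hc, Finset.smul_sum]

end SchmidtNumberLE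

theorem convex_setOf_isDensityMatrix : Convex ℝ {ρ : Matrix n n ℂ | IsDensityMatrix ρ} := by
  rintro ρ ⟨ρ_psd, ρ_trace⟩ σ ⟨σ_psd, σ_trace⟩ a b ha hb hab
  refine ⟨(ρ_psd.smul ha).add (σ_psd.smul hb), ?_⟩
  rw [trace_add, trace_smul, trace_smul, ρ_trace, σ_trace, ← add_smul, hab, one_smul]

theorem convex_setOf_schmidtNumberLE (r : ℕ) :
    Convex ℝ {ρ : Matrix (m × n) (m × n) ℂ | SchmidtNumberLE ρ r} :=
  fun _ hρ _ hσ _ _ ha hb _ => (hρ.smul ha).add (hσ.smul hb)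

/-- The pure states `ψψ†` given by the unit vectors `ψ` of Schmidt rank at most `r`. They are the
generators whose convex hull is the set of states of Schmidt number at most `r`. -/
def pureStatesSchmidtRankLE (m n : Type*) [Fintype m] [Fintype n] (r : ℕ) :
    Set (Matrix (m × n) (m × n) ℂ) :=
  (fun ψ => vecMulVec ψ (star ψ)) '' {ψ | schmidtRank ψ ≤ r ∧ ψ ⬝ᵥ star ψ = 1}

theorem isCompact_pureStatesSchmidtRankLE (r : ℕ) :
    IsCompact (pureStatesSchmidtRankLE m n r) :=
  (isCompact_setOf_dotProduct_self_star_eq_one.inter_left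
    (isClosed_setOf_schmidtRank_le r)).image (continuous_id.matrix_vecMulVec continuous_star)

theorem pureStatesSchmidtRankLE_subset_setOf_isDensityMatrix_and_schmidtNumberLE (r : ℕ) :
    pureStatesSchmidtRankLE m n r ⊆ {ρ | IsDensityMatrix ρ ∧ SchmidtNumberLE ρ r} := by
  rintro _ ⟨ψ, ⟨hψ, unit⟩, rfl⟩
  exact ⟨⟨posSemidef_vecMulVec_self_star ψ, (trace_vecMulVec _ _).trans unit⟩,
    1, fun _ => ψ, fun _ => hψ, by simp⟩

theorem mem_convexHull_pureStatesSchmidtRankLE {r : ℕ} {ρ : Matrix (m × n) (m × n) ℂ}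
    (hρ : SchmidtNumberLE ρ r) (trace_eq : ρ.trace = 1) :
    ρ ∈ convexHull ℝ (pureStatesSchmidtRankLE m n r) := by
  obtain ⟨k, ψ, hψ, rfl⟩ := hρ
  let C : Set (Matrix (m × n) (m × n) ℂ) :=
    (fun ψ => vecMulVec ψ (star ψ)) '' {ψ | schmidtRank ψ ≤ r}
  let reTrace : Matrix (m × n) (m × n) ℂ →ₗ[ℝ] ℝ := Complex.reLm ∘ₗ traceLinearMap (m × n) ℝ ℂ
  have smul_mem (c : ℝ) (hc : 0 < c) : ∀ σ ∈ C, c • σ ∈ C := by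
    rintro _ ⟨φ, hφ, rfl⟩
    refine ⟨√c • φ, (schmidtRank_smul_le _ _).trans hφ, ?_⟩
    simp only [vecMulVec_smul_self_star, Real.sq_sqrt hc.le]
  have reTrace_pos : ∀ σ ∈ C, σ ≠ 0 → 0 < reTrace σ := by
    rintro _ ⟨φ, -, rfl⟩ hφ
    have φ_ne_zero : φ ≠ 0 := by rintro rfl; exact hφ (zero_vecMulVec _)
    have trace_pos : 0 < (vecMulVec φ (star φ)).trace := by
      rw [trace_vecMulVec]
      exact dotProduct_self_star_pos_iff.2 φ_ne_zero
    exact (Complex.pos_iff.1 trace_pos).1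
  have base_subset : C ∩ {σ | reTrace σ = 1} ⊆ pureStatesSchmidtRankLE m n r := by
    rintro _ ⟨⟨φ, hφ, rfl⟩, hre⟩
    refine ⟨φ, ⟨hφ, ?_⟩, rfl⟩
    have trace_nonneg := (posSemidef_vecMulVec_self_star φ).trace_nonneg
    rw [← trace_vecMulVec]
    exact Complex.ext hre (Complex.nonneg_iff.1 trace_nonneg).2.symm
  have reTrace_sum : reTrace (∑ i, vecMulVec (ψ i) (star (ψ i))) = 1 := congrArg Complex.re trace_eq
  exact convexHull_mono base_subset <|
    sum_mem_convexHull_inter_of_map_sum_eq_one reTrace smul_mem reTrace_pos Finset.univ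
      (fun i _ => ⟨ψ i, hψ i, rfl⟩) reTrace_sum

theorem setOf_isDensityMatrix_and_schmidtNumberLE_eq_convexHull (r : ℕ) :
    {ρ : Matrix (m × n) (m × n) ℂ | IsDensityMatrix ρ ∧ SchmidtNumberLE ρ r} =
      convexHull ℝ (pureStatesSchmidtRankLE m n r) :=
  Set.Subset.antisymm
    (fun _ hρ => mem_convexHull_pureStatesSchmidtRankLE hρ.2 hρ.1.2)
    (convexHull_min (pureStatesSchmidtRankLE_subset_setOf_isDensityMatrix_and_schmidtNumberLE r)
      (convex_setOf_isDensityMatrix.inter (convex_setOf_schmidtNumberLE r)))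

theorem schmidt_number_le_set_convex_compact_general (r : ℕ) :
    Convex ℝ {ρ : Matrix (m × n) (m × n) ℂ | IsDensityMatrix ρ ∧ SchmidtNumberLE ρ r} ∧
    IsCompact {ρ : Matrix (m × n) (m × n) ℂ | IsDensityMatrix ρ ∧ SchmidtNumberLE ρ r} := by
  rw [setOf_isDensityMatrix_and_schmidtNumberLE_eq_convexHull]
  exact ⟨convex_convexHull ℝ _, isCompact_convexHull (isCompact_pureStatesSchmidtRankLE r)⟩

end SchmidtNumber

/-- the set `S_r` of density matrices with Schmidt number at most `r`
is convex and compact. -/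
theorem schmidt_number_le_set_convex_compact (dA dB r : ℕ)
    (hdA : 0 < dA) (hdB : 0 < dB) (hr1 : 1 ≤ r) (hr2 : r ≤ min dA dB) :
    Convex ℝ {ρ : Matrix (Fin dA × Fin dB) (Fin dA × Fin dB) ℂ |
      IsDensityMatrix ρ ∧ SchmidtNumberLE ρ r} ∧
    IsCompact {ρ : Matrix (Fin dA × Fin dB) (Fin dA × Fin dB) ℂ |
      IsDensityMatrix ρ ∧ SchmidtNumberLE ρ r} :=
  schmidt_number_le_set_convex_compact_general r
end

section
/- For all positive integers dA, dB and all complex matrices ξ (of size dA × dA), ζ (of size dB × dB), and ρ (indexed by (Fin dA × Fin dB) × (Fin dA × Fin dB)): Tr[(P_{dA} ⊗ P_{dB}) · e(ξᵀ ⊗ ρ ⊗ ζᵀ)] = Tr[(ξ ⊗ ζ) ρ] / (dA · dB), where P_d = |Φ⁺_d⟩⟨Φ⁺_d| is the projector onto the maximally entangled state and e is the reindexing of a matrix indexed by Fin dA × ((Fin dA × Fin dB) × Fin dB) to one indexed by (Fin dA × Fin dA) × (Fin dB × Fin dB) via (i₀,((i,j),j₀)) ↦ ((i₀,i),(j,j₀))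 applied to rows and columns. -/
open Matrix
open scoped Kronecker ComplexOrder

/-- Reindexing `(i₀, ((i,j), j₀)) ↦ ((i₀, i), (j, j₀))`. -/
def eIdx (dA dB : ℕ) :
    (Fin dA × ((Fin dA × Fin dB) × Fin dB)) ≃ (Fin dA × Fin dA) × (Fin dB × Fin dB) where
  toFun x := ((x.1, x.2.1.1), (x.2.1.2, x.2.2))
  invFun x := (x.1.1, ((x.1.2, x.2.1), x.2.2))
  left_inv x := rfl
  right_inv x := rfl

/-!
Up to normalization `|Φ⁺_d⟩` is the vectorization of the identity matrix, so
`(A ⊗ B) vec X = vec (B X Aᵀ)` gives `Tr[P_d (A ⊗ B)] = Tr[Aᵀ B] / d`. Both sides of the trace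
identity are additive in `ρ`, and every `ρ` is a sum of products `X ⊗ Y`; for such a product the
left-hand side splits into the two factors `Tr[P_{dA} (ξᵀ ⊗ X)]` and `Tr[P_{dB} (Y ⊗ ζᵀ)]`.
-/

section Kronecker

variable {l m n p R : Type*}

@[elab_as_elim]
theorem kronecker_induction [Finite l] [Finite m] [Finite n] [Finite p] [NonAssocSemiring R]
    {motive : Matrix (l × m) (n × p) R → Prop} (M : Matrix (l × m) (n × p) R)
    (zero : motive 0) (add : ∀ M N, motive M → motive N → motive (M + N))
    (kronecker : ∀ (A : Matrix l n R) (B : Matrix m p R), motive (A ⊗ₖ B)) : motive M := by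
  classical
  induction M using Matrix.induction_on' with
  | h_zero => exact zero
  | h_add M N hM hN => exact add M N hM hN
  | h_std_basis r c x =>
    have single_eq_kronecker :
        single r c x = single r.1 c.1 x ⊗ₖ single r.2 c.2 (1 : R) := by
      rw [single_kronecker_single, mul_one]
    exact single_eq_kronecker ▸ kronecker _ _

theorem trace_vecMulVec_vec_mul_kronecker [CommSemiring R] [Fintype l] [Fintype m] [Fintype n]
    [Fintype p] (X : Matrix m n R) (Y : Matrix l p R) (A : Matrix p n R) (B : Matrix l m R) :
    (vecMulVec (vec X) (vec Y) * (A ⊗ₖ B)).trace = (Yᵀ * (B * X * Aᵀ)).trace := by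
  rw [trace_mul_comm, mul_vecMulVec, trace_vecMulVec, dotProduct_comm, kronecker_mulVec_vec,
    vec_dotProduct_vec]

end Kronecker

theorem reindex_eIdx_kronecker {R : Type*} [Semigroup R] {dA dB dA' dB' : ℕ}
    (A B : Matrix (Fin dA) (Fin dA') R) (C D : Matrix (Fin dB) (Fin dB') R) :
    reindex (eIdx dA dB) (eIdx dA' dB') (A ⊗ₖ ((B ⊗ₖ C) ⊗ₖ D)) = (A ⊗ₖ B) ⊗ₖ (C ⊗ₖ D) := by
  ext i j
  simp [eIdx, mul_assoc]

theorem maxEnt_eq_smul_vec_one (d : ℕ) :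
    maxEnt d = (Real.sqrt d : ℂ)⁻¹ • vec (1 : Matrix (Fin d) (Fin d) ℂ) := by
  ext ⟨i, j⟩
  simp [maxEnt, vec, one_apply, eq_comm]

theorem projME_eq_smul_vecMulVec_vec_one (d : ℕ) :
    projME d = (d : ℂ)⁻¹ • vecMulVec (vec 1) (vec 1) := by
  have star_vec_one : star (vec (1 : Matrix (Fin d) (Fin d) ℂ)) = vec 1 := by
    rw [star_vec, Matrix.map_one star (star_zero ℂ) (star_one ℂ)]
  have sqrt_mul_sqrt : (Real.sqrt d : ℂ) * Real.sqrt d = d := by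
    rw [← Complex.ofReal_mul, Real.mul_self_sqrt d.cast_nonneg, Complex.ofReal_natCast]
  rw [projME, maxEnt_eq_smul_vec_one, star_smul, star_vec_one, star_inv₀, Complex.star_def,
    Complex.conj_ofReal, smul_vecMulVec, vecMulVec_smul, smul_smul, ← mul_inv,
    sqrt_mul_sqrt]

theorem trace_projME_mul_kronecker {d : ℕ} (A B : Matrix (Fin d) (Fin d) ℂ) :
    (projME d * (A ⊗ₖ B)).trace = (Aᵀ * B).trace / d := by
  rw [projME_eq_smul_vecMulVec_vec_one, Matrix.smul_mul, trace_smul,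
    trace_vecMulVec_vec_mul_kronecker, transpose_one, Matrix.one_mul, Matrix.mul_one,
    trace_mul_comm, smul_eq_mul, inv_mul_eq_div]

/-- the key trace identity:
`Tr[(P_{dA} ⊗ P_{dB}) · e(ξᵀ ⊗ ρ ⊗ ζᵀ)] = Tr[(ξ ⊗ ζ) ρ] / (dA dB)`. -/
theorem trace_identity_maximally_entangled (dA dB : ℕ) (hdA : 0 < dA) (hdB : 0 < dB)
    (ξ : Matrix (Fin dA) (Fin dA) ℂ) (ζ : Matrix (Fin dB) (Fin dB) ℂ)
    (ρ : Matrix (Fin dA × Fin dB) (Fin dA × Fin dB) ℂ) :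
    Matrix.trace ((projME dA ⊗ₖ projME dB) *
        Matrix.reindex (eIdx dA dB) (eIdx dA dB) (ξᵀ ⊗ₖ (ρ ⊗ₖ ζᵀ))) =
      Matrix.trace ((ξ ⊗ₖ ζ) * ρ) / ((dA : ℂ) * (dB : ℂ)) := by
  induction ρ using kronecker_induction with
  | zero => simp
  | add M N hM hN =>
    simp only [add_kronecker, kronecker_add, reindex_apply,
      submatrix_add, Pi.add_apply, Matrix.mul_add, trace_add, add_div] at hM hN ⊢
    rw [hM, hN]
  | kronecker X Y =>
    calc trace ((projME dA ⊗ₖ projME dB) *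
          reindex (eIdx dA dB) (eIdx dA dB) (ξᵀ ⊗ₖ ((X ⊗ₖ Y) ⊗ₖ ζᵀ)))
      _ = (projME dA * (ξᵀ ⊗ₖ X)).trace * (projME dB * (Y ⊗ₖ ζᵀ)).trace := by
        rw [reindex_eIdx_kronecker, ← mul_kronecker_mul, trace_kronecker]
      _ = ((ξ * X).trace / dA) * ((ζ * Y).trace / dB) := by
        rw [trace_projME_mul_kronecker, trace_projME_mul_kronecker, transpose_transpose,
          ← transpose_mul, trace_transpose]
      _ = ((ξ ⊗ₖ ζ) * (X ⊗ₖ Y)).trace / (dA * dB) := by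
        rw [div_mul_div_comm, ← mul_kronecker_mul, trace_kronecker]
end

section
/- For every λ ∈ (5/8, 1], the two-qutrit isotropic state ρ^iso₃(λ) = λ P₃ + (1−λ) I/9 on ℂ³⊗ℂ³ has Schmidt number greater than 2; in particular Tr[(I − (3/2) P₃) ρ^iso₃(λ)] < 0 exactly when λ > 5/8. -/
open Matrix
open scoped Kronecker ComplexOrder

/-!
The trace of a square matrix `C` of rank at most `r` satisfies `|tr C|² ≤ r ‖C‖²` in the Frobenius
norm: write `C = A B` where `A` has `rank C` orthonormal columns, so that `‖A‖² = rank C` and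
`‖B‖ = ‖C‖`, and apply Cauchy–Schwarz to `tr (A B)`. For `C = C_ψ` one has `⟨Φ⁺_d|ψ⟩ = tr C_ψ / √d`
and `⟨ψ|ψ⟩ = ‖C_ψ‖²`, so `I − (d/r) P_d` has nonnegative expectation in every state of Schmidt
number at most `r`. Its expectation in the isotropic state is affine in the mixing parameter and
changes sign at `(r d − 1) / (d² − 1)`, which is `5/8` for `d = 3`, `r = 2`.
-/

section RankTrace

open scoped Matrix.Norms.Frobenius

variable {𝕜 m n : Type*} [RCLike 𝕜] [Fintype m] [Fintype n]

theorem frobenius_norm_sq_eq_sum (A : Matrix m n 𝕜) : ‖A‖ ^ 2 = ∑ i, ∑ j, ‖A i j‖ ^ 2 := by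
  simp only [frobenius_norm_def, Real.rpow_two, ← Real.sqrt_eq_rpow]
  exact Real.sq_sqrt (by positivity)

theorem trace_conjTranspose_mul_self_eq_frobenius_norm_sq (A : Matrix m n 𝕜) :
    (Aᴴ * A).trace = ((‖A‖ ^ 2 : ℝ) : 𝕜) := by
  rw [frobenius_norm_sq_eq_sum, Finset.sum_comm]
  simp [Matrix.trace, Matrix.mul_apply, RCLike.conj_mul]

theorem frobenius_norm_mul_of_conjTranspose_mul_self_eq_one {l : Type*} [Fintype l] [DecidableEq l]
    {A : Matrix m l 𝕜} (hA : Aᴴ * A = 1) (B : Matrix l n 𝕜) : ‖A * B‖ = ‖B‖ := by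
  have gram_eq : (A * B)ᴴ * (A * B) = Bᴴ * B := by
    rw [conjTranspose_mul, Matrix.mul_assoc, ← Matrix.mul_assoc Aᴴ, hA, Matrix.one_mul]
  have trace_eq := congrArg Matrix.trace gram_eq
  simp only [trace_conjTranspose_mul_self_eq_frobenius_norm_sq] at trace_eq
  exact (sq_eq_sq₀ (norm_nonneg _) (norm_nonneg _)).mp (by exact_mod_cast trace_eq)

theorem norm_trace_mul_le_frobenius_norm_mul (A : Matrix m n 𝕜) (B : Matrix n m 𝕜) :
    ‖(A * B).trace‖ ≤ ‖A‖ * ‖B‖ := by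
  have hB : ‖B‖ ^ 2 = ∑ i, ∑ j, ‖B j i‖ ^ 2 := by
    rw [frobenius_norm_sq_eq_sum, Finset.sum_comm]
  refine le_of_sq_le_sq ?_ (by positivity)
  calc ‖(A * B).trace‖ ^ 2
      ≤ (∑ x : m × n, ‖A x.1 x.2‖ * ‖B x.2 x.1‖) ^ 2 := by
        gcongr
        simp only [Matrix.trace, Matrix.diag_apply, Matrix.mul_apply, ← norm_mul,
          ← Fintype.sum_prod_type']
        exact norm_sum_le _ _
    _ ≤ (∑ x : m × n, ‖A x.1 x.2‖ ^ 2) * ∑ x : m × n, ‖B x.2 x.1‖ ^ 2 :=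
        Finset.sum_mul_sq_le_sq_mul_sq _ _ _
    _ = (‖A‖ * ‖B‖) ^ 2 := by
        rw [mul_pow, frobenius_norm_sq_eq_sum A, hB, Fintype.sum_prod_type, Fintype.sum_prod_type]

theorem exists_conjTranspose_mul_self_eq_one_and_eq_mul (C : Matrix m n 𝕜) :
    ∃ (A : Matrix m (Fin C.rank) 𝕜) (B : Matrix (Fin C.rank) n 𝕜), Aᴴ * A = 1 ∧ C = A * B := by
  classical
  have finrank_range : Module.finrank 𝕜 (LinearMap.range C.toEuclideanLin) = C.rank := by
    rw [toEuclideanLin, toLpLin_eq_toLin, ← rank_eq_finrank_range_toLin]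
  let b := (stdOrthonormalBasis 𝕜 (LinearMap.range C.toEuclideanLin)).reindex
    (finCongr finrank_range)
  let column (j : n) : LinearMap.range C.toEuclideanLin :=
    ⟨C.toEuclideanLin (EuclideanSpace.single j 1), LinearMap.mem_range_self _ _⟩
  refine ⟨.of fun i k => (b k : EuclideanSpace 𝕜 m) i, .of fun k j => b.repr (column j) k, ?_, ?_⟩
  · ext k l
    have inner_b := orthonormal_iff_ite.mp b.orthonormal k l
    simpa [Matrix.mul_apply, Matrix.one_apply, PiLp.inner_apply, mul_comm] using inner_b
  · ext i j
    have column_eq := congrArg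
      (fun v : LinearMap.range C.toEuclideanLin => (v : EuclideanSpace 𝕜 m) i)
      (b.sum_repr (column j))
    simpa [Matrix.mul_apply, column, mul_comm] using column_eq.symm

theorem norm_trace_sq_le_rank_mul_frobenius_norm_sq (C : Matrix n n 𝕜) :
    ‖C.trace‖ ^ 2 ≤ C.rank * ‖C‖ ^ 2 := by
  obtain ⟨A, B, hA, hC⟩ := exists_conjTranspose_mul_self_eq_one_and_eq_mul C
  have norm_A : ‖A‖ ^ 2 = C.rank := by
    have h := trace_conjTranspose_mul_self_eq_frobenius_norm_sq A
    rw [hA, trace_one, Fintype.card_fin] at h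
    exact_mod_cast h.symm
  have norm_B : ‖C‖ = ‖B‖ :=
    (congrArg norm hC).trans (frobenius_norm_mul_of_conjTranspose_mul_self_eq_one hA B)
  calc ‖C.trace‖ ^ 2 = ‖(A * B).trace‖ ^ 2 := by rw [← hC]
    _ ≤ (‖A‖ * ‖B‖) ^ 2 := by gcongr; exact norm_trace_mul_le_frobenius_norm_mul A B
    _ = C.rank * ‖C‖ ^ 2 := by rw [mul_pow, norm_A, norm_B]

end RankTrace

section Overlap

open scoped Matrix.Norms.Frobenius

/-- The matrix `C_ψ` of coefficients of a bipartite vector `ψ`, whose rank is the Schmidt rank. -/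
def coeffMatrix {m n : Type*} (ψ : m × n → ℂ) : Matrix m n ℂ :=
  .of fun i j => ψ (i, j)

theorem trace_vecMulVec_star_eq_norm_coeffMatrix_sq {m n : Type*} [Fintype m] [Fintype n]
    (ψ : m × n → ℂ) : (vecMulVec ψ (star ψ)).trace = ((‖coeffMatrix ψ‖ ^ 2 : ℝ) : ℂ) := by
  simp [frobenius_norm_sq_eq_sum, dotProduct, coeffMatrix, Fintype.sum_prod_type, Complex.mul_conj']

theorem star_maxEnt_dotProduct (d : ℕ) (ψ : Fin d × Fin d → ℂ) :
    star (maxEnt d) ⬝ᵥ ψ = (coeffMatrix ψ).trace / (√d : ℝ) := by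
  simp [dotProduct, maxEnt, coeffMatrix, Matrix.trace, Fintype.sum_prod_type, Finset.mul_sum,
    div_eq_inv_mul, apply_ite]

theorem star_maxEnt_dotProduct_maxEnt {d : ℕ} (hd : d ≠ 0) : star (maxEnt d) ⬝ᵥ maxEnt d = 1 := by
  have sqrt_mul_sqrt : ((√d : ℝ) : ℂ) * (√d : ℝ) = d := by
    exact_mod_cast Real.mul_self_sqrt d.cast_nonneg
  rw [star_maxEnt_dotProduct]
  simp [coeffMatrix, Matrix.trace, maxEnt, ← div_eq_mul_inv, div_div, sqrt_mul_sqrt, hd]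

theorem trace_projME {d : ℕ} (hd : d ≠ 0) : (projME d).trace = 1 := by
  rw [projME, trace_vecMulVec, dotProduct_comm, star_maxEnt_dotProduct_maxEnt hd]

theorem projME_mul_self {d : ℕ} (hd : d ≠ 0) : projME d * projME d = projME d := by
  rw [projME, vecMulVec_mul_vecMulVec, star_maxEnt_dotProduct_maxEnt hd, one_smul]

theorem trace_projME_mul_vecMulVec_star (d : ℕ) (ψ : Fin d × Fin d → ℂ) :
    (projME d * vecMulVec ψ (star ψ)).trace = ((‖(coeffMatrix ψ).trace‖ ^ 2 / d : ℝ) : ℂ) := by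
  have overlap_conj : maxEnt d ⬝ᵥ star ψ = star (star (maxEnt d) ⬝ᵥ ψ) := by
    rw [star_dotProduct, star_star, dotProduct_comm]
  have norm_overlap_sq : ‖star (maxEnt d) ⬝ᵥ ψ‖ ^ 2 = ‖(coeffMatrix ψ).trace‖ ^ 2 / d := by
    rw [star_maxEnt_dotProduct, norm_div, div_pow, Complex.norm_real, Real.norm_eq_abs, sq_abs,
      Real.sq_sqrt d.cast_nonneg]
  rw [projME, vecMulVec_mul_vecMulVec, trace_vecMulVec, dotProduct_smul, overlap_conj, smul_eq_mul,
    ← norm_overlap_sq, Complex.star_def, Complex.mul_conj', Complex.ofReal_pow]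

end Overlap

section Witness

open scoped Matrix.Norms.Frobenius

variable {d r : ℕ}

/-- The observable `I − (d/r) P_d`, the optimal witness for Schmidt number greater than `r`. Since
division by zero is zero, it is the identity for `r = 0`. -/
noncomputable def schmidtWitness (d r : ℕ) : Matrix (Fin d × Fin d) (Fin d × Fin d) ℂ :=
  1 - ((d : ℂ) / r) • projME d

theorem trace_schmidtWitness_mul (ρ : Matrix (Fin d × Fin d) (Fin d × Fin d) ℂ) :
    (schmidtWitness d r * ρ).trace = ρ.trace - d / r * (projME d * ρ).trace := by
  rw [schmidtWitness, sub_mul, one_mul, smul_mul_assoc, trace_sub, trace_smul, smul_eq_mul]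

theorem trace_schmidtWitness_mul_vecMulVec_star_nonneg (hd : d ≠ 0) {ψ : Fin d × Fin d → ℂ}
    (hψ : schmidtRank ψ ≤ r) : 0 ≤ (schmidtWitness d r * vecMulVec ψ (star ψ)).trace := by
  have trace_eq : (schmidtWitness d r * vecMulVec ψ (star ψ)).trace =
      ((‖coeffMatrix ψ‖ ^ 2 - ‖(coeffMatrix ψ).trace‖ ^ 2 / r : ℝ) : ℂ) := by
    rw [trace_schmidtWitness_mul, trace_vecMulVec_star_eq_norm_coeffMatrix_sq,
      trace_projME_mul_vecMulVec_star]
    push_cast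
    field_simp
  have rank_le : ((coeffMatrix ψ).rank : ℝ) ≤ r := by exact_mod_cast hψ
  have norm_trace_sq_le : ‖(coeffMatrix ψ).trace‖ ^ 2 ≤ ‖coeffMatrix ψ‖ ^ 2 * r :=
    calc ‖(coeffMatrix ψ).trace‖ ^ 2 ≤ (coeffMatrix ψ).rank * ‖coeffMatrix ψ‖ ^ 2 :=
          norm_trace_sq_le_rank_mul_frobenius_norm_sq _
      _ ≤ ‖coeffMatrix ψ‖ ^ 2 * r := by rw [mul_comm]; gcongr
  rw [trace_eq, Complex.zero_le_real, sub_nonneg]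
  exact div_le_of_le_mul₀ r.cast_nonneg (sq_nonneg _) norm_trace_sq_le

theorem trace_schmidtWitness_mul_nonneg (hd : d ≠ 0)
    {ρ : Matrix (Fin d × Fin d) (Fin d × Fin d) ℂ} (hρ : SchmidtNumberLE ρ r) :
    0 ≤ (schmidtWitness d r * ρ).trace := by
  obtain ⟨k, ψ, hψ, rfl⟩ := hρ
  rw [Matrix.mul_sum, trace_sum]
  exact Finset.sum_nonneg fun i _ => trace_schmidtWitness_mul_vecMulVec_star_nonneg hd (hψ i)

end Witness

section Isotropic

variable {d r : ℕ}

theorem trace_isoState (hd : d ≠ 0) (p : ℝ) : (isoState d p).trace = 1 := by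
  simp only [isoState, trace_add, trace_smul, trace_projME hd, trace_one, Fintype.card_prod,
    Fintype.card_fin, smul_eq_mul]
  push_cast
  field_simp
  ring

theorem trace_projME_mul_isoState (hd : d ≠ 0) (p : ℝ) :
    (projME d * isoState d p).trace = ((p + (1 - p) / d ^ 2 : ℝ) : ℂ) := by
  simp only [isoState, mul_add, mul_smul_comm, mul_one, projME_mul_self hd, trace_add, trace_smul,
    trace_projME hd, smul_eq_mul, Complex.ofReal_add]

theorem trace_schmidtWitness_mul_isoState_neg_iff (hd : 1 < d) (hr : 0 < r) (p : ℝ) :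
    (schmidtWitness d r * isoState d p).trace < 0 ↔ ((r * d - 1) / (d ^ 2 - 1) : ℝ) < p := by
  have hd0 : d ≠ 0 := by lia
  have hd1 : (1 : ℝ) < d := by exact_mod_cast hd
  have r_mul_d_pos : (0 : ℝ) < r * d := by positivity
  have d_sq_sub_one_pos : (0 : ℝ) < d ^ 2 - 1 := by nlinarith
  have trace_eq : (schmidtWitness d r * isoState d p).trace =
      (((r * d - 1 - p * (d ^ 2 - 1)) / (r * d) : ℝ) : ℂ) := by
    rw [trace_schmidtWitness_mul, trace_isoState hd0, trace_projME_mul_isoState hd0]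
    push_cast
    field_simp
    ring
  rw [trace_eq, ← Complex.ofReal_zero, Complex.real_lt_real, div_lt_iff₀ r_mul_d_pos, zero_mul,
    sub_neg, div_lt_iff₀ d_sq_sub_one_pos]

theorem isotropic_qutrit_schmidt_number_gt_two_general (hd : 1 < d) (hr : 0 < r) :
    (∀ p : ℝ, ((r * d - 1) / (d ^ 2 - 1) : ℝ) < p → ¬ SchmidtNumberLE (isoState d p) r) ∧
    (∀ p : ℝ, (schmidtWitness d r * isoState d p).trace < 0 ↔
      ((r * d - 1) / (d ^ 2 - 1) : ℝ) < p) := by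
  have neg_iff := trace_schmidtWitness_mul_isoState_neg_iff hd hr
  refine ⟨fun p hp hρ => ?_, neg_iff⟩
  exact ((neg_iff p).mpr hp).not_ge (trace_schmidtWitness_mul_nonneg (by lia) hρ)

end Isotropic

/-- the two-qutrit isotropic state `ρ^iso₃(λ)` has Schmidt number greater
than 2 for `λ ∈ (5/8, 1]`; in particular the optimal witness value
`Tr[(I − (3/2)P₃) ρ^iso₃(λ)]` is negative exactly when `λ > 5/8`. -/
theorem isotropic_qutrit_schmidt_number_gt_two :
    (∀ l : ℝ, 5 / 8 < l → l ≤ 1 → ¬ SchmidtNumberLE (isoState 3 l) 2) ∧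
    (∀ l : ℝ, 0 ≤ l → l ≤ 1 →
      (Matrix.trace ((1 - ((3 : ℂ) / 2) • projME 3) * isoState 3 l) < 0 ↔ 5 / 8 < l)) := by
  have threshold : ((2 * 3 - 1) / (3 ^ 2 - 1) : ℝ) = 5 / 8 := by norm_num
  have h := isotropic_qutrit_schmidt_number_gt_two_general (d := 3) (r := 2) (by simp) (by simp)
  simp only [schmidtWitness, Nat.cast_ofNat, threshold] at h
  exact ⟨fun l hl _ => h.1 l hl, fun l _ _ => h.2 l⟩
end
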